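/- arXiv:2209.00418 — 3 statements merged into one kernel-verified Lean document; each statement's English description precedes it below -/
import Mathlib

section
/- Let [P,Q] be a linear interval of height k ≥ 2 in the Dyck lattice Dyck_n. Then there exist (possibly empty) words A and B such that either P = A d^k u B and Q = A u d^k B, or P = A d u^k B and Q = A u^k d B. -/
/-!
Common definitions.  A letter of a word is a `Bool`: `true` is an up step `u`,
`false` is a down step `d`.  Positions in words are 0-based.
-/

/-- A (possibly empty) Dyck word: as many `u`'s as `d`'s, and every
prefix has at least as many `u`'s as `d`'s. -/
def IsDyckPath (w : List Bool) : Prop :=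
  w.count true = w.count false ∧ ∀ p, p <+: w → p.count false ≤ p.count true

/-- A Dyck word of size `n`: `n` up steps, `n` down steps, every prefix has
at least as many `u`'s as `d`'s. -/
def IsDyckWord (n : ℕ) (w : List Bool) : Prop :=
  w.count true = n ∧ w.count false = n ∧ ∀ p, p <+: w → p.count false ≤ p.count true

/-- The set of Dyck words of size `n`. -/
def DyckSet (n : ℕ) : Set (List Bool) := {w | IsDyckWord n w}

/-- An increment function: a `{0,1}`-valued function (the paper's `δ : {1,…,n} → {0,1}`;
only the values on `{1,…,n}` are ever used). -/
def IsIncFun (δ : ℕ → ℤ) : Prop := ∀ i, δ i = 0 ∨ δ i = 1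

/-- The 0-based position in `w` of the `i`-th up step `u_i` (`i` is 1-based). -/
def upPos (w : List Bool) (i : ℕ) : ℕ :=
  ((List.range w.length).filter fun q => w.getD q false = true).getD (i - 1) 0

/-- `h_i(w)`: the (1-based, between 1 and 2n) position of the up step `u_i` in `w`. -/
def hpos (w : List Bool) (i : ℕ) : ℕ := upPos w i + 1

/-- The change of δ-altitude produced by the letter at position `q` of `w`:
the up step `u_i` contributes `δ i`, a down step contributes `-1`. -/
def stepVal (δ : ℕ → ℤ) (w : List Bool) (q : ℕ) : ℤ :=
  if w.getD q false = true then δ ((w.take (q + 1)).count true) else -1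

/-- The δ-elevation of the factor of `w` occupying positions `a, …, b-1`. -/
def elev (δ : ℕ → ℤ) (w : List Bool) (a b : ℕ) : ℤ :=
  ∑ q ∈ Finset.Ico a b, stepVal δ w q

/-- `C` is the δ-excursion of the up step of `w` at position `p`:
the smallest (nonempty) factor of `w` starting at `p` whose δ-elevation is `0`. -/
def IsDeltaExcAt (δ : ℕ → ℤ) (w : List Bool) (p : ℕ) (C : List Bool) : Prop :=
  w.getD p false = true ∧
  ∃ m, 0 < m ∧ p + m ≤ w.length ∧ C = (w.drop p).take m ∧
    elev δ w p (p + m) = 0 ∧ ∀ m', 0 < m' → m' < m → elev δ w p (p + m') ≠ 0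

/-- `C` is the excursion of the up step of `w` at position `p`: the smallest factor
of `w` starting at `p` that is itself a Dyck word. -/
def IsExcursionAt (w : List Bool) (p : ℕ) (C : List Bool) : Prop :=
  w.getD p false = true ∧
  ∃ m, 0 < m ∧ p + m ≤ w.length ∧ C = (w.drop p).take m ∧ IsDyckPath C ∧
    ∀ m', 0 < m' → m' < m → ¬ IsDyckPath ((w.drop p).take m')

/-- `ℓ_i(w; δ)`: the length of the δ-excursion of `u_i` in `w`. -/
noncomputable def excLen (δ : ℕ → ℤ) (w : List Bool) (i : ℕ) : ℕ :=
  sInf {m | 0 < m ∧ elev δ w (upPos w i) (upPos w i + m) = 0}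

/-- `Q` is the δ-rotation of `P` at some up step: `P = A d C B` with `d u_i` a valley
and `C` the δ-excursion of `u_i`, and `Q = A C d B`. -/
def DeltaRot (δ : ℕ → ℤ) (P Q : List Bool) : Prop :=
  ∃ A C B, P = A ++ false :: (C ++ B) ∧ Q = A ++ (C ++ false :: B) ∧
    IsDeltaExcAt δ P (A.length + 1) C

/-- The alt-Tamari order `Tam^δ`: reflexive transitive closure of δ-rotations. -/
def altLE (δ : ℕ → ℤ) : List Bool → List Bool → Prop :=
  Relation.ReflTransGen (DeltaRot δ)

/-- The Tamari order: the alt-Tamari order for `δ ≡ 1` (the δ-excursion of any up step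
is then its excursion). -/
def tamLE : List Bool → List Bool → Prop := altLE fun _ => 1

/-- The height (number of `u`'s minus number of `d`'s) of the length-`j` prefix of `w`. -/
def prefHeight (w : List Bool) (j : ℕ) : ℤ :=
  ((w.take j).count true : ℤ) - ((w.take j).count false : ℤ)

/-- The Dyck (inclusion) order: every prefix height of `P` is at most that of `Q`. -/
def dyckLE (P Q : List Bool) : Prop := ∀ j, prefHeight P j ≤ prefHeight Q j

/-- Strict version of a relation `le`. -/
def ltOf (le : List Bool → List Bool → Prop) (P Q : List Bool) : Prop :=
  le P Q ∧ ¬ le Q P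

/-- There is a strict chain `P = c 0 < c 1 < ⋯ < c k = Q` inside `S`. -/
def HasChainIn (S : Set (List Bool)) (le : List Bool → List Bool → Prop)
    (P Q : List Bool) (k : ℕ) : Prop :=
  ∃ c : ℕ → List Bool, c 0 = P ∧ c k = Q ∧ (∀ i ≤ k, c i ∈ S) ∧
    ∀ i < k, ltOf le (c i) (c (i + 1))

/-- The interval `[P,Q]` of the poset `(S, le)` has height `k`: `k` is the maximal
length of a chain from `P` to `Q`. -/
def IntervalHeight (S : Set (List Bool)) (le : List Bool → List Bool → Prop)
    (P Q : List Bool) (k : ℕ) : Prop :=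
  HasChainIn S le P Q k ∧ ∀ m, HasChainIn S le P Q m → m ≤ k

/-- The interval `[P,Q]` of the poset `(S, le)` is linear: it is totally ordered. -/
def LinearInterval (S : Set (List Bool)) (le : List Bool → List Bool → Prop)
    (P Q : List Bool) : Prop :=
  P ∈ S ∧ Q ∈ S ∧ le P Q ∧
  ∀ R R', R ∈ S → R' ∈ S → le P R → le R Q → le P R' → le R' Q → le R R' ∨ le R' R

/-- `Q` covers `P` in the poset `(S, le)`. -/
def CovIn (S : Set (List Bool)) (le : List Bool → List Bool → Prop)
    (P Q : List Bool) : Prop :=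
  P ∈ S ∧ Q ∈ S ∧ ltOf le P Q ∧ ∀ R ∈ S, ¬ (ltOf le P R ∧ ltOf le R Q)

/-- The number of valleys (factors `du`) of `w`. -/
def valleys (w : List Bool) : ℕ :=
  ((List.range w.length).filter fun q => !w.getD q true && w.getD (q + 1) false).length

/-!
Let `P < Q` bound a linear interval. Past their longest common prefix, the words become `d P'` and
`u Q'`. Moving the first `u` of `d P'` to the front gives the least word `R ≥ d P'` that starts with
`u`, and moving the first `d` of `u Q'` to the front gives the greatest word `T ≤ u Q'` that starts
with `d`; so both lie in the interval. Since `R ≰ T`, linearity forces `T ≤ R`. If `P'` starts with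
`d` and `Q'` with `u`, then `T` starts with `duu` and `R` with `udd`, contradicting `T ≤ R`. If `P'`
starts with `u`, then `T ≤ R` gives `T ≤ d P'`, so `d P' = T` and the interval is a right one; if
`Q'` starts with `d`, then dually `u Q' = R` and it is a left one.

Such an interval is filled by `m` successive flips `du ↦ ud`, where `m` is the number of letters
that were jumped over. Each flip raises the area by exactly `1` while every strict inequality raises
it by at least `1`, so `m` is the height.
-/

open List

section PrefixHeights

@[simp]
lemma prefHeight_zero (w : List Bool) : prefHeight w 0 = 0 := by simp [prefHeight]

@[simp]
lemma prefHeight_cons_true_succ (w : List Bool) (j : ℕ) :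
    prefHeight (true :: w) (j + 1) = prefHeight w j + 1 := by
  simp [prefHeight, sub_add_eq_add_sub]

@[simp]
lemma prefHeight_cons_false_succ (w : List Bool) (j : ℕ) :
    prefHeight (false :: w) (j + 1) = prefHeight w j - 1 := by
  simp [prefHeight, sub_sub]

lemma abs_prefHeight_le (w : List Bool) (j : ℕ) : |prefHeight w j| ≤ j := by
  have hcount := (w.take j).count_true_add_count_false
  have hlen : (w.take j).length ≤ j := length_take_le j w
  rw [abs_le, prefHeight]
  omega

lemma prefHeight_erase_true {w : List Bool} (hw : true ∈ w) (j : ℕ) :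
    prefHeight (w.erase true) j = max (-j : ℤ) (prefHeight w (j + 1) - 1) := by
  induction w generalizing j with
  | nil => simp at hw
  | cons b w ih =>
    cases b with
    | true =>
      have hj := abs_le.1 (abs_prefHeight_le w j)
      simp [hj.1]
    | false =>
      cases j with
      | zero => simp
      | succ j =>
        have hih := ih (by simpa using hw) j
        simp only [erase_cons, Bool.false_beq, Bool.not_true, Bool.false_eq_true, if_false,
          prefHeight_cons_false_succ, hih]
        push_cast
        omega

lemma prefHeight_erase_false {w : List Bool} (hw : false ∈ w) (j : ℕ) :
    prefHeight (w.erase false) j = min (j : ℤ) (prefHeight w (j + 1) + 1) := by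
  induction w generalizing j with
  | nil => simp at hw
  | cons b w ih =>
    cases b with
    | false =>
      have hj := abs_le.1 (abs_prefHeight_le w j)
      simp [hj.2]
    | true =>
      cases j with
      | zero => simp
      | succ j =>
        have hih := ih (by simpa using hw) j
        simp only [erase_cons, Bool.true_beq, Bool.false_eq_true, if_false,
          prefHeight_cons_true_succ, hih]
        push_cast
        omega

lemma prefHeight_le_prefHeight_iff {P Q : List Bool} (hl : P.length = Q.length) (j : ℕ) :
    prefHeight P j ≤ prefHeight Q j ↔ (P.take j).count true ≤ (Q.take j).count true := by
  have hP := (P.take j).count_true_add_count_false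
  have hQ := (Q.take j).count_true_add_count_false
  rw [length_take] at hP hQ
  simp only [prefHeight]
  omega

end PrefixHeights

section InclusionOrder

@[refl]
lemma dyckLE_refl (P : List Bool) : dyckLE P P := fun _ => le_rfl

lemma dyckLE.trans {P Q R : List Bool} (hPQ : dyckLE P Q) (hQR : dyckLE Q R) : dyckLE P R :=
  fun j => (hPQ j).trans (hQR j)

@[simp]
lemma dyckLE_cons_iff (b : Bool) (P Q : List Bool) :
    dyckLE (b :: P) (b :: Q) ↔ dyckLE P Q := by
  constructor
  · intro h j
    have := h (j + 1)
    cases b <;> simpa using this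
  · rintro h (_ | j)
    · simp
    · cases b <;> simpa using h j

@[simp]
lemma dyckLE_append_left_iff (A P Q : List Bool) :
    dyckLE (A ++ P) (A ++ Q) ↔ dyckLE P Q := by
  induction A with
  | nil => simp
  | cons b A ih => simp [ih]

@[simp]
lemma not_dyckLE_true_false (P Q : List Bool) : ¬ dyckLE (true :: P) (false :: Q) := by
  intro h
  have h1 := h (0 + 1)
  simp at h1

/-- Erasing the first `u` is left adjoint to prepending a `u`. -/
lemma dyckLE_cons_true_iff {P Q : List Bool} (hP : true ∈ P) :
    dyckLE P (true :: Q) ↔ dyckLE (P.erase true) Q := by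
  constructor
  · intro h j
    have hj := h (j + 1)
    have hQ := abs_le.1 (abs_prefHeight_le Q j)
    rw [prefHeight_cons_true_succ] at hj
    rw [prefHeight_erase_true hP]
    omega
  · rintro h (_ | j)
    · simp
    · have hj := h j
      rw [prefHeight_erase_true hP] at hj
      rw [prefHeight_cons_true_succ]
      omega

lemma dyckLE_cons_false_iff {P Q : List Bool} (hQ : false ∈ Q) :
    dyckLE (false :: P) Q ↔ dyckLE P (Q.erase false) := by
  constructor
  · intro h j
    have hj := h (j + 1)
    have hP := abs_le.1 (abs_prefHeight_le P j)
    rw [prefHeight_cons_false_succ] at hj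
    rw [prefHeight_erase_false hQ]
    omega
  · rintro h (_ | j)
    · simp
    · have hj := h j
      rw [prefHeight_erase_false hQ] at hj
      rw [prefHeight_cons_false_succ]
      omega

@[simp]
lemma dyckLE_flip_iff (P Q : List Bool) :
    dyckLE (false :: true :: P) (true :: false :: Q) ↔ dyckLE P Q := by
  simp [dyckLE_cons_true_iff]

lemma exists_common_prefix_of_dyckLE {P Q : List Bool} (hl : P.length = Q.length)
    (hle : dyckLE P Q) (hne : P ≠ Q) :
    ∃ A P' Q', P = A ++ false :: P' ∧ Q = A ++ true :: Q' := by
  induction P generalizing Q with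
  | nil => exact absurd (length_eq_zero_iff.1 hl.symm).symm hne
  | cons p P ih =>
    obtain _ | ⟨q, Q⟩ := Q
    · simp at hl
    by_cases hpq : p = q
    · subst hpq
      obtain ⟨A, P', Q', rfl, rfl⟩ :=
        ih (by simpa using hl) (by simpa using hle) (by simpa using hne)
      exact ⟨p :: A, P', Q', rfl, rfl⟩
    · obtain ⟨rfl, rfl⟩ : p = false ∧ q = true := by
        cases p <;> cases q <;> simp_all
      exact ⟨[], P, Q, rfl, rfl⟩

lemma dyckLE.antisymm {P Q : List Bool} (hPQ : dyckLE P Q) (hQP : dyckLE Q P)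
    (hl : P.length = Q.length) : P = Q := by
  by_contra hne
  obtain ⟨A, P', Q', rfl, rfl⟩ := exists_common_prefix_of_dyckLE hl hPQ hne
  simp at hQP

end InclusionOrder

section Flips

/-- `FlipChain P k Q`: the word `Q` is obtained from `P` by `k` successive replacements of a
valley `du` by a peak `ud`, which are the covering relations of the inclusion order. -/
inductive FlipChain (P : List Bool) : ℕ → List Bool → Prop
  | refl : FlipChain P 0 P
  | tail {k : ℕ} {A B : List Bool} (h : FlipChain P k (A ++ false :: true :: B)) :
      FlipChain P (k + 1) (A ++ true :: false :: B)

lemma ltOf_flip (A B : List Bool) :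
    ltOf dyckLE (A ++ false :: true :: B) (A ++ true :: false :: B) := by
  simp [ltOf, dyckLE_refl]

lemma FlipChain.perm {k : ℕ} {P Q : List Bool} (h : FlipChain P k Q) : P ~ Q := by
  induction h with
  | refl => rfl
  | @tail _ A B _ ih => exact ih.trans ((Perm.swap true false B).append_left A)

lemma FlipChain.le {k : ℕ} {P Q : List Bool} (h : FlipChain P k Q) : dyckLE P Q := by
  induction h with
  | refl => rfl
  | tail _ ih => exact ih.trans (ltOf_flip _ _).1

/-- `IsLeftInterval k P Q`: the interval `[P, Q]` is the left interval `P = A d^k u B`,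
`Q = A u d^k B`. -/
def IsLeftInterval (k : ℕ) (P Q : List Bool) : Prop :=
  ∃ A B : List Bool, P = A ++ (replicate k false ++ true :: B) ∧
    Q = A ++ (true :: (replicate k false ++ B))

/-- `IsRightInterval k P Q`: the interval `[P, Q]` is the right interval `P = A d u^k B`,
`Q = A u^k d B`. -/
def IsRightInterval (k : ℕ) (P Q : List Bool) : Prop :=
  ∃ A B : List Bool, P = A ++ (false :: (replicate k true ++ B)) ∧
    Q = A ++ (replicate k true ++ false :: B)

lemma IsLeftInterval.flipChain {k : ℕ} {P Q : List Bool} (h : IsLeftInterval k P Q) :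
    FlipChain P k Q := by
  obtain ⟨A, B, rfl, rfl⟩ := h
  induction k generalizing A with
  | zero => exact .refl
  | succ k ih =>
    have hinner := ih (A ++ [false])
    simp only [append_assoc, cons_append, nil_append] at hinner
    exact hinner.tail

lemma IsRightInterval.flipChain {k : ℕ} {P Q : List Bool} (h : IsRightInterval k P Q) :
    FlipChain P k Q := by
  obtain ⟨A, B, rfl, rfl⟩ := h
  induction k generalizing B with
  | zero => exact .refl
  | succ k ih =>
    have hinner := ih (true :: B)
    rw [← append_assoc] at hinner
    simpa [replicate_succ'] using hinner.tail

end Flips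

section Area

/-- The area under a word, used as a rank function of the inclusion order. It is encoded as the
total number of up steps in all prefixes, which for words of fixed length is half the sum of the
prefix heights up to an additive constant. -/
def area (w : List Bool) : ℕ := ∑ j ∈ Finset.range (w.length + 1), (w.take j).count true

lemma area_cons (b : Bool) (w : List Bool) :
    area (b :: w) = (if b then w.length + 1 else 0) + area w := by
  rw [area, length_cons, Finset.sum_range_succ']
  cases b <;> simp [area, Finset.sum_add_distrib, add_comm]

lemma area_flip (A B : List Bool) :
    area (A ++ true :: false :: B) = area (A ++ false :: true :: B) + 1 := by
  induction A with
  | nil => simp [area_cons, add_right_comm]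
  | cons b A ih => simp [area_cons, ih, add_assoc]

lemma FlipChain.area_eq {k : ℕ} {P Q : List Bool} (h : FlipChain P k Q) :
    area Q = area P + k := by
  induction h with
  | refl => rfl
  | tail _ ih => rw [area_flip, ih, add_assoc]

lemma area_lt_area_of_ltOf {P Q : List Bool} (hl : P.length = Q.length)
    (h : ltOf dyckLE P Q) : area P < area Q := by
  obtain ⟨hle, hnot⟩ := h
  obtain ⟨j, hj⟩ := not_forall.1 hnot
  rw [prefHeight_le_prefHeight_iff hl.symm, not_le, take_eq_take_min (l := P),
    take_eq_take_min (l := Q), hl] at hj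
  rw [area, area, hl]
  exact Finset.sum_lt_sum (fun i _ => (prefHeight_le_prefHeight_iff hl i).1 (hle i))
    ⟨min j Q.length, by simp, hj⟩

end Area

section ConvexWordSets

/-- A set of words that are rearrangements of one another, order-convex for the inclusion order
among those rearrangements: Dyck words of a given size, but also, say, the lattice paths between
two given ones. -/
structure IsConvexWordSet (S : Set (List Bool)) : Prop where
  perm : ∀ {P Q : List Bool}, P ∈ S → Q ∈ S → P ~ Q
  mem_of_le_of_le : ∀ {P Q R : List Bool}, P ∈ S → Q ∈ S → P ~ R → dyckLE P R → dyckLE R Q → R ∈ S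

variable {S : Set (List Bool)} {A P Q : List Bool} {k : ℕ}

lemma FlipChain.hasChainIn (hS : IsConvexWordSet S) (hP : P ∈ S) (hQ : Q ∈ S)
    (h : FlipChain P k Q) : HasChainIn S dyckLE P Q k := by
  induction h with
  | refl => exact ⟨fun _ => P, rfl, rfl, fun _ _ => hP, by simp⟩
  | @tail k A B h ih =>
    obtain ⟨c, hc₀, hck, hmem, hlt⟩ := ih (hS.mem_of_le_of_le hP hQ h.perm h.le
      (ltOf_flip A B).1)
    refine ⟨fun i => if i ≤ k then c i else A ++ true :: false :: B, by simpa, by simp,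
      fun i _ => ?_, fun i hi => ?_⟩
    · dsimp only
      split_ifs with hik
      exacts [hmem i hik, hQ]
    · obtain hik | rfl := (Nat.le_of_lt_succ hi).lt_or_eq
      · simpa [hik.le, Nat.succ_le_of_lt hik] using hlt i hik
      · simpa [hck] using ltOf_flip A B

lemma HasChainIn.area_add_le (hS : IsConvexWordSet S) (h : HasChainIn S dyckLE P Q k) :
    area P + k ≤ area Q := by
  obtain ⟨c, rfl, rfl, hmem, hlt⟩ := h
  induction k with
  | zero => rfl
  | succ k ih =>
    have hinit := ih (fun i hi => hmem i (by omega)) (fun i hi => hlt i (by omega))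
    have hlast := area_lt_area_of_ltOf (hS.perm (hmem k (by omega)) (hmem (k + 1) le_rfl)).length_eq
      (hlt k (by omega))
    omega

lemma IntervalHeight.eq_of_flipChain {m : ℕ} (hS : IsConvexWordSet S) (hP : P ∈ S) (hQ : Q ∈ S)
    (hht : IntervalHeight S dyckLE P Q k) (h : FlipChain P m Q) : k = m := by
  have hle := hht.1.area_add_le hS
  have hge := hht.2 m (h.hasChainIn hS hP hQ)
  have harea := h.area_eq
  omega

lemma LinearInterval.dyckLE_erase (hS : IsConvexWordSet S)
    (h : LinearInterval S dyckLE (A ++ false :: P) (A ++ true :: Q)) :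
    dyckLE (Q.erase false) (P.erase true) := by
  obtain ⟨hPS, hQS, hle, htotal⟩ := h
  have hperm : false :: P ~ true :: Q := (perm_append_left_iff A).1 (hS.perm hPS hQS)
  have hP : true ∈ false :: P := hperm.mem_iff.2 mem_cons_self
  have hQ : false ∈ true :: Q := hperm.mem_iff.1 mem_cons_self
  rw [dyckLE_append_left_iff] at hle
  have hPR : dyckLE (A ++ false :: P) (A ++ true :: (false :: P).erase true) :=
    (dyckLE_append_left_iff ..).2 ((dyckLE_cons_true_iff hP).2 (dyckLE_refl _))
  have hRQ : dyckLE (A ++ true :: (false :: P).erase true) (A ++ true :: Q) := by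
    simpa only [dyckLE_append_left_iff, dyckLE_cons_iff] using (dyckLE_cons_true_iff hP).1 hle
  have hPT : dyckLE (A ++ false :: P) (A ++ false :: (true :: Q).erase false) := by
    simpa only [dyckLE_append_left_iff, dyckLE_cons_iff] using (dyckLE_cons_false_iff hQ).1 hle
  have hTQ : dyckLE (A ++ false :: (true :: Q).erase false) (A ++ true :: Q) :=
    (dyckLE_append_left_iff ..).2 ((dyckLE_cons_false_iff hQ).2 (dyckLE_refl _))
  have hR : A ++ true :: (false :: P).erase true ∈ S :=
    hS.mem_of_le_of_le hPS hQS ((perm_cons_erase hP).append_left A) hPR hRQ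
  have hT : A ++ false :: (true :: Q).erase false ∈ S :=
    hS.mem_of_le_of_le hPS hQS ((hperm.trans (perm_cons_erase hQ)).append_left A) hPT hTQ
  simpa using htotal _ _ hR hT hPR hRQ hPT hTQ

lemma eq_erase_or_eq_erase (hperm : false :: P ~ true :: Q)
    (hle : dyckLE (false :: P) (true :: Q)) (herase : dyckLE (Q.erase false) (P.erase true)) :
    Q = (false :: P).erase true ∨ P = (true :: Q).erase false := by
  have hP : true ∈ false :: P := hperm.mem_iff.2 mem_cons_self
  have hQ : false ∈ true :: Q := hperm.mem_iff.1 mem_cons_self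
  have hlen : P.length = Q.length := by simpa using hperm.length_eq
  have hlower : dyckLE ((false :: P).erase true) Q := (dyckLE_cons_true_iff hP).1 hle
  have hupper : dyckLE P ((true :: Q).erase false) := (dyckLE_cons_false_iff hQ).1 hle
  obtain _ | ⟨_ | _, P⟩ := P
  · simp at hP
  · obtain _ | ⟨_ | _, Q⟩ := Q
    · simp at hQ
    · have hlen' := hlen.symm.trans (length_erase_of_mem hP).symm
      exact .inl (dyckLE.antisymm (by simpa using herase) hlower hlen')
    · simp at herase
  · have hlen' := hlen.trans (length_erase_of_mem hQ).symm
    exact .inr (dyckLE.antisymm hupper (by simpa using herase) hlen')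

lemma exists_isLeftInterval_erase (A : List Bool) (hP : true ∈ P) :
    ∃ m, IsLeftInterval m (A ++ P) (A ++ true :: P.erase true) := by
  obtain ⟨D, B, hD, rfl, herase⟩ := exists_erase_eq hP
  have hD' : D = replicate D.length false := eq_replicate_of_mem (by simpa using hD)
  exact ⟨D.length, A, B, by rw [← hD'], by rw [← hD', herase]⟩

lemma exists_isRightInterval_erase (A : List Bool) (hQ : false ∈ Q) :
    ∃ m, IsRightInterval m (A ++ false :: Q.erase false) (A ++ Q) := by
  obtain ⟨U, B, hU, rfl, herase⟩ := exists_erase_eq hQ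
  have hU' : U = replicate U.length true := eq_replicate_of_mem (by simpa using hU)
  exact ⟨U.length, A, B, by rw [← hU', herase], by rw [← hU']⟩

theorem LinearInterval.exists_isLeftInterval_or_isRightInterval (hS : IsConvexWordSet S)
    (h : LinearInterval S dyckLE P Q) (hne : P ≠ Q) :
    ∃ m, IsLeftInterval m P Q ∨ IsRightInterval m P Q := by
  have hperm : P ~ Q := hS.perm h.1 h.2.1
  obtain ⟨A, P, Q, rfl, rfl⟩ := exists_common_prefix_of_dyckLE hperm.length_eq h.2.2.1 hne
  rw [perm_append_left_iff] at hperm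
  obtain rfl | rfl := eq_erase_or_eq_erase hperm ((dyckLE_append_left_iff ..).1 h.2.2.1)
    (h.dyckLE_erase hS)
  · obtain ⟨m, hm⟩ := exists_isLeftInterval_erase A (hperm.mem_iff.2 mem_cons_self)
    exact ⟨m, .inl hm⟩
  · obtain ⟨m, hm⟩ := exists_isRightInterval_erase A (hperm.mem_iff.1 mem_cons_self)
    exact ⟨m, .inr hm⟩

end ConvexWordSets

lemma IsDyckWord.of_dyckLE {n : ℕ} {P R : List Bool} (hP : IsDyckWord n P) (hperm : P ~ R)
    (hle : dyckLE P R) : IsDyckWord n R := by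
  refine ⟨(hperm.count_eq _).symm.trans hP.1, (hperm.count_eq _).symm.trans hP.2.1, fun p hp => ?_⟩
  rw [prefix_iff_eq_take.1 hp]
  have hPnonneg := hP.2.2 _ (take_prefix p.length P)
  have hheight := hle p.length
  simp only [prefHeight] at hheight
  omega

lemma isConvexWordSet_dyckSet (n : ℕ) : IsConvexWordSet (DyckSet n) where
  perm hP hQ := perm_iff_count.2 <|
    Bool.forall_bool.2 ⟨hP.2.1.trans hQ.2.1.symm, hP.1.trans hQ.1.symm⟩
  mem_of_le_of_le hP _ hperm hle _ := hP.of_dyckLE hperm hle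

theorem stmt4_general {S : Set (List Bool)} (hS : IsConvexWordSet S) {k : ℕ} (hk : k ≠ 0)
    {P Q : List Bool} (hlin : LinearInterval S dyckLE P Q)
    (hht : IntervalHeight S dyckLE P Q k) : IsLeftInterval k P Q ∨ IsRightInterval k P Q := by
  have hne : P ≠ Q := by
    rintro rfl
    have := hht.1.area_add_le hS
    omega
  obtain ⟨m, hm⟩ := hlin.exists_isLeftInterval_or_isRightInterval hS hne
  have hflip : FlipChain P m Q := hm.elim IsLeftInterval.flipChain IsRightInterval.flipChain
  obtain rfl : k = m := hht.eq_of_flipChain hS hlin.1 hlin.2.1 hflip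
  exact hm

/-- every linear interval of height `k ≥ 2` in the Dyck lattice is a left
or a right interval. -/
theorem stmt4 (n k : ℕ) (hk : 2 ≤ k) (P Q : List Bool)
    (hlin : LinearInterval (DyckSet n) dyckLE P Q)
    (hht : IntervalHeight (DyckSet n) dyckLE P Q k) :
    (∃ A B : List Bool,
        P = A ++ (List.replicate k false ++ true :: B) ∧
        Q = A ++ (true :: (List.replicate k false ++ B))) ∨
    (∃ A B : List Bool,
        P = A ++ (false :: (List.replicate k true ++ B)) ∧
        Q = A ++ (List.replicate k true ++ false :: B)) :=
  stmt4_general (isConvexWordSet_dyckSet n) (by omega) hlin hht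
end

section
/- For every increment function δ of size n and Dyck words P, Q of size n: if Q is the δ-rotation of P at some up step, then P < Q strictly in the Dyck lattice Dyck_n; consequently, if P ≤ Q in the alt-Tamari poset Tam^δ_n, then P ≤ Q in Dyck_n. -/
/-!
A δ-rotation moves a down step to the right past the δ-excursion `C`, one letter at a time, and
exchanging a down step with the letter after it never lowers any prefix height. The word does
change, because `C` begins with an up step, which takes the position of the down step.
-/

section DyckOrder

instance : IsPreorder (List Bool) dyckLE where
  refl _ _ := le_rfl
  trans _ _ _ hPQ hQR j := (hPQ j).trans (hQR j)

theorem prefHeight_append (P Q : List Bool) (j : ℕ) :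
    prefHeight (P ++ Q) j = prefHeight P j + prefHeight Q (j - P.length) := by
  simp only [prefHeight, List.take_append, List.count_append]
  push_cast
  ring

theorem dyckLE.append_left (A : List Bool) {P Q : List Bool} (h : dyckLE P Q) :
    dyckLE (A ++ P) (A ++ Q) := fun j => by
  simpa only [prefHeight_append, add_le_add_iff_left] using h (j - A.length)

theorem dyckLE_false_cons_cons (c : Bool) (w : List Bool) :
    dyckLE (false :: c :: w) (c :: false :: w) := by
  rintro (_ | _ | j)
  · exact le_rfl
  · cases c <;> simp [prefHeight]
  · cases c <;> simp [prefHeight]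

theorem dyckLE_false_cons_append (C B : List Bool) :
    dyckLE (false :: (C ++ B)) (C ++ false :: B) := by
  induction C with
  | nil => exact refl _
  | cons c C ih => exact _root_.trans (dyckLE_false_cons_cons c (C ++ B)) (ih.append_left [c])

end DyckOrder

section Rotation

variable {δ : ℕ → ℤ}

theorem IsDeltaExcAt.head?_eq_some_true {w C : List Bool} {p : ℕ} (h : IsDeltaExcAt δ w p C) :
    C.head? = some true := by
  obtain ⟨hup, m, hm, hlen, rfl, -⟩ := h
  have hp : p < w.length := by omega
  rw [List.getD_eq_getElem _ _ hp] at hup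
  rw [List.head?_take, if_neg hm.ne', List.head?_drop, List.getElem?_eq_getElem hp, hup]

variable {P Q : List Bool}

theorem DeltaRot.dyckLE (h : DeltaRot δ P Q) : dyckLE P Q := by
  obtain ⟨A, C, B, rfl, rfl, -⟩ := h
  exact (dyckLE_false_cons_append C B).append_left A

theorem DeltaRot.ne (h : DeltaRot δ P Q) : P ≠ Q := by
  obtain ⟨A, C, B, rfl, rfl, hC⟩ := h
  obtain ⟨C', rfl⟩ := List.head?_eq_some_iff.mp hC.head?_eq_some_true
  simp

theorem altLE.dyckLE (h : altLE δ P Q) : dyckLE P Q :=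
  Relation.reflTransGen_le_of_le (fun _ _ hrot => hrot.dyckLE) _ _ h

end Rotation

theorem stmt6_general (δ : ℕ → ℤ) :
    (∀ P Q : List Bool, DeltaRot δ P Q → dyckLE P Q ∧ P ≠ Q) ∧
    (∀ P Q : List Bool, altLE δ P Q → dyckLE P Q) :=
  ⟨fun _ _ h => ⟨h.dyckLE, h.ne⟩, fun _ _ h => h.dyckLE⟩

/-- a δ-rotation increases strictly in the Dyck order; consequently the
Dyck order refines the alt-Tamari order. -/
theorem stmt6 (n : ℕ) (δ : ℕ → ℤ) (hδ : IsIncFun δ) :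
    (∀ P Q : List Bool, IsDyckWord n P → IsDyckWord n Q →
      DeltaRot δ P Q → dyckLE P Q ∧ P ≠ Q) ∧
    (∀ P Q : List Bool, IsDyckWord n P → IsDyckWord n Q →
      altLE δ P Q → dyckLE P Q) := by
  obtain ⟨hrot, hle⟩ := stmt6_general δ
  exact ⟨fun P Q _ _ => hrot P Q, fun P Q _ _ => hle P Q⟩
end

section
/- Let δ be an increment function of size n, P a Dyck word of size n, and let C_i, C_j be the δ-excursions in P of distinct up steps u_i and u_j. Then, as factors of P, either C_i and C_j are disjoint or one is contained in the other; moreover, C_i and C_j do not end at the same position of P. -/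
/-!
Along a word the δ-altitude drops by at most one per letter, so it cannot pass below a level
without visiting it. Since an up step does not lower the altitude, the δ-excursion of an up step
ends the first time the altitude is at or below its starting level. An up step strictly inside the
excursion `C` starts above the starting level of `C`, so by the end of `C` the altitude has already
returned to the level of that up step: the inner excursion ends, strictly earlier.
-/

theorem exists_mem_Icc_eq_of_le_succ_add_one {s : ℕ → ℤ} {a b : ℕ} {v : ℤ} (hab : a ≤ b)
    (hs : ∀ k ∈ Set.Ico a b, s k ≤ s (k + 1) + 1) (ha : v ≤ s a) (hb : s b ≤ v) :
    ∃ c ∈ Set.Icc a b, s c = v := by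
  induction b, hab using Nat.le_induction with
  | base => exact ⟨a, ⟨le_rfl, le_rfl⟩, le_antisymm hb ha⟩
  | succ b hab ih =>
    rcases hb.eq_or_lt with heq | hlt
    · exact ⟨b + 1, ⟨by omega, le_rfl⟩, heq⟩
    · have hstep : s b ≤ s (b + 1) + 1 := hs b ⟨hab, b.lt_succ_self⟩
      obtain ⟨c, ⟨hac, hcb⟩, hc⟩ :=
        ih (fun k hk => hs k ⟨hk.1, hk.2.trans b.lt_succ_self⟩) (by omega)
      exact ⟨c, ⟨hac, by omega⟩, hc⟩

theorem length_filter_range_getD {α : Type*} (w : List α) (d : α) (p : α → Bool) :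
    ((List.range w.length).filter fun q => p (w.getD q d)).length = w.countP p := by
  have hw : (List.range w.length).map (fun q => w.getD q d) = w :=
    List.ext_getElem (by simp) (by simp +contextual)
  calc ((List.range w.length).filter fun q => p (w.getD q d)).length
      = (List.range w.length).countP (p ∘ fun q => w.getD q d) := List.countP_eq_length_filter.symm
    _ = ((List.range w.length).map fun q => w.getD q d).countP p := List.countP_map.symm
    _ = w.countP p := by rw [hw]

theorem strictMonoOn_upPos (w : List Bool) :
    StrictMonoOn (upPos w) (Set.Icc 1 (w.count true)) := by
  rintro i ⟨hi1, hi⟩ j ⟨hj1, hj⟩ hij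
  have hlen : ((List.range w.length).filter fun q => w.getD q false = true).length =
      w.count true := by
    simpa [List.count] using length_filter_range_getD w false (· == true)
  have hsorted : ((List.range w.length).filter fun q => w.getD q false = true).Pairwise (· < ·) :=
    List.pairwise_lt_range.filter _
  unfold upPos
  rw [List.getD_eq_getElem _ _ (by omega), List.getD_eq_getElem _ _ (by omega)]
  exact List.pairwise_iff_getElem.1 hsorted _ _ _ _ (by omega)

theorem IsIncFun.nonneg {δ : ℕ → ℤ} (hδ : IsIncFun δ) (k : ℕ) : 0 ≤ δ k := by
  rcases hδ k with h | h <;> simp [h]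

section Elevation

theorem neg_one_le_stepVal {δ : ℕ → ℤ} (hδ : ∀ k, -1 ≤ δ k) (w : List Bool) (q : ℕ) :
    -1 ≤ stepVal δ w q := by
  unfold stepVal
  split_ifs
  exacts [hδ _, le_rfl]

theorem elev_succ (δ : ℕ → ℤ) (w : List Bool) {a b : ℕ} (hab : a ≤ b) :
    elev δ w a (b + 1) = elev δ w a b + stepVal δ w b :=
  Finset.sum_Ico_succ_top hab _

theorem elev_add_elev (δ : ℕ → ℤ) (w : List Bool) {a b c : ℕ} (hab : a ≤ b) (hbc : b ≤ c) :
    elev δ w a b + elev δ w b c = elev δ w a c :=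
  Finset.sum_Ico_consecutive _ hab hbc

variable {w : List Bool} {p : ℕ}

theorem elev_self_succ_of_up (δ : ℕ → ℤ) (hp : w.getD p false = true) :
    elev δ w p (p + 1) = δ ((w.take (p + 1)).count true) := by
  rw [elev, Nat.Ico_succ_singleton, Finset.sum_singleton, stepVal, if_pos hp]

variable {δ : ℕ → ℤ}

theorem exists_elev_eq_zero_of_elev_nonpos (hδ : ∀ k, 0 ≤ δ k) (hp : w.getD p false = true)
    {b : ℕ} (hpb : p < b) (hb : elev δ w p b ≤ 0) : ∃ c, p < c ∧ c ≤ b ∧ elev δ w p c = 0 := by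
  have hstart : 0 ≤ elev δ w p (p + 1) := (hδ _).trans_eq (elev_self_succ_of_up δ hp).symm
  have hdrop : ∀ k ∈ Set.Ico (p + 1) b, elev δ w p k ≤ elev δ w p (k + 1) + 1 := by
    rintro k ⟨hpk, -⟩
    have hstep := neg_one_le_stepVal (fun i => neg_one_lt_zero.le.trans (hδ i)) w k
    rw [elev_succ δ w (Nat.le_of_succ_le hpk)]
    omega
  obtain ⟨c, ⟨hpc, hcb⟩, hc⟩ := exists_mem_Icc_eq_of_le_succ_add_one hpb hdrop hstart hb
  exact ⟨c, hpc, hcb, hc⟩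

namespace IsDeltaExcAt

variable {C : List Bool}

theorem isLeast_length (hC : IsDeltaExcAt δ w p C) :
    IsLeast {m | 0 < m ∧ elev δ w p (p + m) = 0} C.length := by
  obtain ⟨-, m, hm, hmw, rfl, hzero, hmin⟩ := hC
  have hlen : ((w.drop p).take m).length = m := by
    rw [List.length_take, List.length_drop, min_eq_left (by omega)]
  rw [hlen]
  exact ⟨⟨hm, hzero⟩, fun k hk => not_lt.1 fun hkm => hmin k hk.1 hkm hk.2⟩

theorem length_pos (hC : IsDeltaExcAt δ w p C) : 0 < C.length :=
  hC.isLeast_length.1.1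

theorem elev_eq_zero (hC : IsDeltaExcAt δ w p C) : elev δ w p (p + C.length) = 0 :=
  hC.isLeast_length.1.2

theorem end_le_of_elev_nonpos (hδ : ∀ k, 0 ≤ δ k) (hC : IsDeltaExcAt δ w p C) {b : ℕ}
    (hpb : p < b) (hb : elev δ w p b ≤ 0) : p + C.length ≤ b := by
  obtain ⟨c, hpc, hcb, hc⟩ := exists_elev_eq_zero_of_elev_nonpos hδ hC.1 hpb hb
  have hmin : C.length ≤ c - p :=
    hC.isLeast_length.2 ⟨by omega, by rwa [Nat.add_sub_cancel' hpc.le]⟩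
  omega

theorem end_le_or_end_lt_end (hδ : ∀ k, 0 ≤ δ k) {q : ℕ} {D : List Bool}
    (hC : IsDeltaExcAt δ w p C) (hD : IsDeltaExcAt δ w q D) (hpq : p < q) :
    p + C.length ≤ q ∨ q + D.length < p + C.length := by
  refine or_iff_not_imp_left.2 fun hqC => ?_
  rw [not_le] at hqC
  have helev_pos : 0 < elev δ w p q :=
    not_le.1 fun h => hqC.not_ge (hC.end_le_of_elev_nonpos hδ hpq h)
  have helev_neg : elev δ w q (p + C.length) < 0 := by
    have hadd := elev_add_elev δ w hpq.le hqC.le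
    rw [hC.elev_eq_zero] at hadd
    omega
  refine (hD.end_le_of_elev_nonpos hδ hqC helev_neg.le).lt_of_ne fun hend => ?_
  rw [← hend, hD.elev_eq_zero] at helev_neg
  exact helev_neg.false

end IsDeltaExcAt

end Elevation

theorem stmt7_general {δ : ℕ → ℤ} (hδ : ∀ k, 0 ≤ δ k) {P : List Bool} {i j : ℕ}
    (hi1 : 1 ≤ i) (hi : i ≤ P.count true) (hj1 : 1 ≤ j) (hj : j ≤ P.count true) (hij : i ≠ j)
    {Ci Cj : List Bool} (hCi : IsDeltaExcAt δ P (upPos P i) Ci)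
    (hCj : IsDeltaExcAt δ P (upPos P j) Cj) :
    ((upPos P i + Ci.length ≤ upPos P j ∨ upPos P j + Cj.length ≤ upPos P i) ∨
      (upPos P i ≤ upPos P j ∧ upPos P j + Cj.length ≤ upPos P i + Ci.length) ∨
      (upPos P j ≤ upPos P i ∧ upPos P i + Ci.length ≤ upPos P j + Cj.length)) ∧
    upPos P i + Ci.length ≠ upPos P j + Cj.length := by
  have hne : upPos P i ≠ upPos P j := (strictMonoOn_upPos P).injOn.ne ⟨hi1, hi⟩ ⟨hj1, hj⟩ hij
  have hCi_pos := hCi.length_pos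
  have hCj_pos := hCj.length_pos
  rcases hne.lt_or_gt with hlt | hgt
  · have hlaminar := hCi.end_le_or_end_lt_end hδ hCj hlt
    omega
  · have hlaminar := hCj.end_le_or_end_lt_end hδ hCi hgt
    omega

/-- two δ-excursions of distinct up steps, seen as factors, are disjoint
or one contains the other, and they do not end at the same position. -/
theorem stmt7 (n : ℕ) (δ : ℕ → ℤ) (hδ : IsIncFun δ) (P : List Bool)
    (hP : IsDyckWord n P) (i j : ℕ) (hi1 : 1 ≤ i) (hin : i ≤ n)
    (hj1 : 1 ≤ j) (hjn : j ≤ n) (hij : i ≠ j) (Ci Cj : List Bool)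
    (hCi : IsDeltaExcAt δ P (upPos P i) Ci)
    (hCj : IsDeltaExcAt δ P (upPos P j) Cj) :
    ((upPos P i + Ci.length ≤ upPos P j ∨ upPos P j + Cj.length ≤ upPos P i) ∨
      (upPos P i ≤ upPos P j ∧ upPos P j + Cj.length ≤ upPos P i + Ci.length) ∨
      (upPos P j ≤ upPos P i ∧ upPos P i + Ci.length ≤ upPos P j + Cj.length)) ∧
    upPos P i + Ci.length ≠ upPos P j + Cj.length :=
  stmt7_general hδ.nonneg hi1 (hin.trans_eq hP.1.symm) hj1 (hjn.trans_eq hP.1.symm) hij hCi hCj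
end
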